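/- Let t ≥ m ≥ 1 and n ≥ 0 be integers and let q ∈ ℂ with 0 < |q| < 1. Then - Σ_{ℓ=0}^{n+1} [ q^{(t+1)ℓ^2 - ℓ} (1 - q^{2ℓ}) / ((q;q)_{n+1-ℓ} (q;q)_{n+1+ℓ}) ] · Σ_{k=-ℓ}^{ℓ-1} (-1)^k q^{-(2t+1)k(k+1)/2 + m k} = Σ Π_{i=1}^{t-1} q^{k_i^2} [ k_{i+1} - k_i - i + Σ_{j=1}^{i} (2 k_j + χ(m > j)) choose k_{i+1} - k_i ]_q, where the right-hand sum is over all tuples of integers with n+1 = k_t ≥ k_{t-1} ≥ … ≥ k_1 ≥ 0 and k_m ≥ 1. In particular, the cyclotomic coefficient C_n^{(t,m)}(q) equals q^{n+1-t} times the right-hand multisum. -/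

import Mathlib

open Finset

/-- The finite q-Pochhammer symbol `(a;q)_n`. -/
noncomputable def qPoch (q a : ℂ) (n : ℕ) : ℂ := ∏ j ∈ Finset.range n, (1 - a * q ^ j)

/-- The Gaussian binomial coefficient `[n choose k]_q`, zero outside `0 ≤ k ≤ n`. -/
noncomputable def qBinom (q : ℂ) (n k : ℤ) : ℂ :=
  if 0 ≤ k ∧ k ≤ n then
    ∏ j ∈ Finset.range k.toNat, (1 - q ^ (n - k + (j : ℤ) + 1)) / (1 - q ^ ((j : ℤ) + 1))
  else 0

/-- The product
`Π_{i=1}^{T-1} q^{k_i²} [k_{i+1} - k_i - i + Σ_{j=1}^{i}(2k_j + χ(M>j)) choose k_{i+1}-k_i]_q`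
of the vector-valued U-function, for tuples of length `t+1`; the paper's `t, m`
are `t+1, m+1`, so `χ(M > j)` (paper `j`) becomes `χ(j < m)` for 0-based `j`. -/
noncomputable def UtProdM (q : ℂ) (t m : ℕ) (K : Fin (t+1) → ℕ) : ℂ :=
  ∏ i : Fin t, (q ^ (K i.castSucc ^ 2) *
    qBinom q ((K i.succ : ℤ) - (K i.castSucc : ℤ) - ((i : ℕ) + 1)
        + ∑ j ∈ Finset.univ.filter (fun j : Fin (t+1) => (j : ℕ) ≤ (i : ℕ)),
            (2 * (K j : ℤ) + if (j : ℕ) < m then 1 else 0))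
      ((K i.succ : ℤ) - (K i.castSucc : ℤ)))

lemma qp_zero (q : ℂ) : qPoch q q 0 = 1 := by simp [qPoch]

lemma qp_succ (q : ℂ) (n : ℕ) : qPoch q q (n+1) = qPoch q q n * (1 - q^(n+1)) := by
  simp [qPoch, Finset.prod_range_succ, pow_succ']

lemma one_sub_ne {q : ℂ} (hq1 : ‖q‖ < 1) (n : ℕ) : 1 - q^(n+1) ≠ 0 := by
  intro h
  have h2 : q^(n+1) = 1 := (sub_eq_zero.mp h).symm
  have h3 : ‖q‖^(n+1) = 1 := by rw [← norm_pow, h2, norm_one]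
  have := pow_lt_one₀ (norm_nonneg q) hq1 (Nat.succ_ne_zero n)
  exact absurd h3 (ne_of_lt this)

lemma qp_ne {q : ℂ} (hq1 : ‖q‖ < 1) (n : ℕ) : qPoch q q n ≠ 0 := by
  induction n with
  | zero => simp [qp_zero]
  | succ n ih => rw [qp_succ]; exact mul_ne_zero ih (one_sub_ne hq1 n)

/-- The operator P. -/
noncomputable def Pop (q : ℂ) (u : ℕ → ℂ) (n : ℕ) : ℂ :=
  ∑ r ∈ Finset.range (n+1), q^(r^2) / qPoch q q (n-r) * u r

/-- The operator S. -/
noncomputable def Sop (q : ℂ) (u : ℕ → ℂ) (n : ℕ) : ℂ := q^n * u n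

/-- Bailey sum. -/
noncomputable def Bs (q : ℂ) (α : ℕ → ℂ) (n : ℕ) : ℂ :=
  ∑ r ∈ Finset.range (n+1), α r / (qPoch q q (n-r) * qPoch q q (n+r))

/-- Gaussian binomials. -/
noncomputable def gb (q : ℂ) : ℕ → ℕ → ℂ
  | _, 0 => 1
  | 0, _+1 => 0
  | n+1, k+1 => q^(k+1) * gb q n (k+1) + gb q n k

lemma gb_zero_right (q : ℂ) (n : ℕ) : gb q n 0 = 1 := by cases n <;> rfl

lemma gb_gt (q : ℂ) (n : ℕ) : ∀ k, n < k → gb q n k = 0 := by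
  induction n with
  | zero => intro k hk; cases k with
    | zero => omega
    | succ k => rfl
  | succ n ih => intro k hk; cases k with
    | zero => omega
    | succ k => simp only [gb]; rw [ih _ (by omega), ih _ (by omega)]; ring

lemma gb_mul {q : ℂ} (n : ℕ) : ∀ k j, k + j = n →
    gb q n k * (qPoch q q k * qPoch q q j) = qPoch q q n := by
  induction n with
  | zero =>
    intro k j h
    obtain ⟨rfl, rfl⟩ : k = 0 ∧ j = 0 := by omega
    simp [gb, qp_zero]
  | succ n ih =>
    intro k j h
    cases k with
    | zero =>
      obtain rfl : j = n + 1 := by omega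
      simp [gb_zero_right, qp_zero]
    | succ k =>
      simp only [gb]
      have h2 := ih k j (by omega)
      cases j with
      | zero =>
        obtain rfl : k = n := by omega
        rw [gb_gt q k (k+1) (by omega), qp_succ]
        rw [qp_zero] at *
        linear_combination (1 - q^(k+1)) * h2
      | succ j =>
        have h1 := ih (k+1) j (by omega)
        obtain rfl : n = k + 1 + j := by omega
        rw [qp_succ q (k+1+j), qp_succ q j]
        rw [qp_succ q j] at h2
        rw [qp_succ q k] at h1 ⊢
        linear_combination q^(k+1) * (1-q^(j+1)) * h1 + (1 - q^(k+1)) * h2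

lemma vander {q : ℂ} (hq1 : ‖q‖ < 1) (N : ℕ) : ∀ a : ℕ,
    ∑ j ∈ Finset.range (N+1), gb q N j * q^(j^2+a*j) / qPoch q q (j+a) = 1 / qPoch q q (N+a) := by
  induction N with
  | zero => intro a; simp [gb]
  | succ N ih =>
    intro a
    have e := ih (a+1)
    rw [show N + 1 + a = N + (a+1) by ring, ← e]
    have L : ∑ j ∈ Finset.range (N+1+1), gb q (N+1) j * q^(j^2+a*j) / qPoch q q (j+a)
        = ∑ j ∈ Finset.range (N+1), gb q N j * q^j * q^(j^2+a*j) / qPoch q q (j+a)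
         + ∑ j ∈ Finset.range (N+1), gb q N j * q^((j+1)^2+a*(j+1)) / qPoch q q (j+1+a) := by
      have hx : ∑ j ∈ Finset.range (N+1), gb q N j * q^j * q^(j^2+a*j) / qPoch q q (j+a)
        = ∑ j ∈ Finset.range (N+1+1), gb q N j * q^j * q^(j^2+a*j) / qPoch q q (j+a) := by
        rw [Finset.sum_range_succ _ (N+1), gb_gt q N (N+1) (by omega)]; simp
      rw [hx, Finset.sum_range_succ' _ (N+1), Finset.sum_range_succ' _ (N+1)]
      rw [add_right_comm, ← Finset.sum_add_distrib]
      congr 1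
      · apply Finset.sum_congr rfl
        intro j _
        simp only [gb]; ring
      · simp [gb_zero_right]
    rw [L, ← Finset.sum_add_distrib]
    apply Finset.sum_congr rfl
    intro j _
    have h1 := qp_ne hq1 (j+a)
    have h2 := one_sub_ne hq1 (j+a)
    rw [show j + 1 + a = j+a+1 by ring, show j + (a+1) = j+a+1 by ring, qp_succ]
    field_simp
    ring

lemma bailey {q : ℂ} (hq1 : ‖q‖ < 1) (α : ℕ → ℂ) :
    Pop q (Bs q α) = Bs q (fun r => q^(r^2) * α r) := by
  funext n
  unfold Pop Bs
  simp_rw [Finset.mul_sum]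
  rw [Finset.sum_comm' (t' := Finset.range (n+1)) (s' := fun r => Finset.Ico r (n+1))
    (by intro x y; simp only [Finset.mem_range, Finset.mem_Ico]; omega)]
  apply Finset.sum_congr rfl
  intro r hr
  have hr' : r ≤ n := by simp at hr; omega
  obtain ⟨N, rfl⟩ := Nat.exists_eq_add_of_le hr'
  rw [Finset.sum_Ico_eq_sum_range, show r + N + 1 - r = N + 1 by omega]
  have v := vander hq1 N (2*r)
  rw [show r + N - r = N by omega, show r + N + r = N + 2*r by ring]
  have : q^(r^2) * α r / (qPoch q q N * qPoch q q (N + 2*r))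
    = q^(r^2) * α r / qPoch q q N * (1 / qPoch q q (N+2*r)) := by
    field_simp
  rw [this, ← v, Finset.mul_sum]
  apply Finset.sum_congr rfl
  intro j hj
  have hj' : j ≤ N := by simp at hj; omega
  obtain ⟨i, rfl⟩ := Nat.exists_eq_add_of_le hj'
  rw [show r + (j + i) - (r+j) = i by omega, show r + j - r = j by omega,
    show r + j + r = j + 2 * r by ring]
  have g := gb_mul (q := q) (j+i) j i rfl
  have h1 := qp_ne hq1 i
  have h2 := qp_ne hq1 j
  have h3 := qp_ne hq1 (j+2*r)
  have h4 := qp_ne hq1 (j+i)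
  field_simp
  rw [← g]; ring

lemma shiftB {q : ℂ} (hq1 : ‖q‖ < 1) (X α α' : ℕ → ℂ)
    (h0 : α 0 = X 0) (h0' : α' 0 = X 0)
    (h : ∀ r, α (r+1) = q^((r+1)^2) * (X (r+1) - X r))
    (h' : ∀ r, α' (r+1) = q^((r+1)^2+(r+1)) * X (r+1) - q^((r+1)*r) * X r) :
    Sop q (Bs q α) = Bs q α' := by
  funext n
  unfold Sop Bs
  have key : ∀ R, R ≤ n → ∑ r ∈ Finset.range (R+1),
      (q^n * α r - α' r) / (qPoch q q (n-r) * qPoch q q (n+r))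
      = (q^(n+R^2) - q^(R^2+R)) * X R / (qPoch q q (n-R) * qPoch q q (n+R)) := by
    intro R
    induction R with
    | zero => intro _; simp [h0, h0']; ring
    | succ R ih =>
      intro hR
      rw [Finset.sum_range_succ, ih (by omega), h, h']
      obtain ⟨d, rfl⟩ := Nat.exists_eq_add_of_le hR
      rw [show R + 1 + d - R = d + 1 by omega, show R + 1 + d - (R+1) = d by omega,
        show R + 1 + d + (R+1) = R+1+d+R+1 by ring, qp_succ q d, qp_succ q (R+1+d+R)]
      have h1 := qp_ne hq1 d
      have h2 := qp_ne hq1 (R+1+d+R)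
      have h3 := one_sub_ne hq1 d
      have h4 := one_sub_ne hq1 (R+1+d+R)
      field_simp
      ring
  have k := key n le_rfl
  rw [show q^(n+n^2) - q^(n^2+n) = 0 by ring, zero_mul, zero_div] at k
  rw [Finset.mul_sum, ← sub_eq_zero, ← Finset.sum_sub_distrib, ← k]
  apply Finset.sum_congr rfl
  intro r _
  ring

open PowerSeries in
lemma core_ps {q : ℂ} (hq1 : ‖q‖ < 1) (D : ℕ) :
    (PowerSeries.mk fun J => qPoch q q (J+D) / (qPoch q q J * qPoch q q D)) *
      PowerSeries.rescale (q^(D+1)) (PowerSeries.mk fun n => 1 / qPoch q q n)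
    = (PowerSeries.mk fun n => 1 / qPoch q q n) := by
  have E1 : (1 - (X : PowerSeries ℂ)) * (PowerSeries.mk fun n => 1 / qPoch q q n)
      = PowerSeries.rescale q (PowerSeries.mk fun n => 1 / qPoch q q n) := by
    ext n
    rw [sub_mul, one_mul, map_sub]
    cases n with
    | zero => simp [qp_zero]
    | succ n =>
      rw [coeff_succ_X_mul, coeff_rescale, coeff_mk, coeff_mk, qp_succ]
      have h1 := qp_ne hq1 n
      have h2 := one_sub_ne hq1 n
      field_simp
      ring
  induction D with
  | zero =>
    have G0 : (1 - (X : PowerSeries ℂ)) * (PowerSeries.mk fun J => qPoch q q (J+0) / (qPoch q q J * qPoch q q 0)) = 1 := by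
      ext n
      rw [sub_mul, one_mul, map_sub]
      cases n with
      | zero => simp [qp_zero]
      | succ n =>
        rw [coeff_succ_X_mul, coeff_mk, coeff_mk, coeff_one]
        simp [qp_zero, div_self (qp_ne hq1 _)]
    rw [zero_add, pow_one, ← E1, ← mul_assoc, mul_comm _ (1 - X), G0, one_mul]
  | succ D ih =>
    have G1 : (1 - C (q^(D+1)) * (X : PowerSeries ℂ)) * (PowerSeries.mk fun J => qPoch q q (J+(D+1)) / (qPoch q q J * qPoch q q (D+1)))
      = (PowerSeries.mk fun J => qPoch q q (J+D) / (qPoch q q J * qPoch q q D)) := by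
      ext n
      rw [sub_mul, one_mul, map_sub, mul_assoc, coeff_C_mul]
      cases n with
      | zero => simp [qp_zero, div_self (qp_ne hq1 _)]
      | succ n =>
        rw [coeff_succ_X_mul, coeff_mk, coeff_mk, coeff_mk, show n + 1 + (D+1) = n+D+1+1 by ring,
          show n + (D+1) = n+D+1 by ring, show n + 1 + D = n+D+1 by ring,
          qp_succ q (n+D+1), qp_succ q n, qp_succ q D]
        have h1 := qp_ne hq1 n
        have h2 := one_sub_ne hq1 n
        have h3 := qp_ne hq1 D
        have h4 := one_sub_ne hq1 D
        field_simp
        ring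
    have E2 : (1 - C (q^(D+1)) * (X : PowerSeries ℂ)) * rescale (q^(D+1)) (PowerSeries.mk fun n => 1 / qPoch q q n)
      = rescale (q^(D+1+1)) (PowerSeries.mk fun n => 1 / qPoch q q n) := by
      have := congrArg (rescale (q^(D+1))) E1
      rw [map_mul, map_sub, map_one, rescale_X, rescale_rescale] at this
      rw [this, pow_succ' q (D+1)]
    rw [← E2, ← mul_assoc, mul_comm _ (1 - C (q^(D+1)) * (X : PowerSeries ℂ)), G1, ih]

lemma Pop_coeff (q : ℂ) (u : ℕ → ℂ) (n : ℕ) : Pop q u n =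
    PowerSeries.coeff n ((PowerSeries.mk fun n => q^(n^2) * u n) * (PowerSeries.mk fun n => 1 / qPoch q q n)) := by
  rw [PowerSeries.coeff_mul, Finset.Nat.sum_antidiagonal_eq_sum_range_succ_mk]
  unfold Pop
  apply Finset.sum_congr rfl
  intro r _
  simp only [PowerSeries.coeff_mk]; ring

lemma core {q : ℂ} (hq1 : ‖q‖ < 1) (D : ℕ) (u : ℕ → ℂ) (M : ℕ) :
    ∑ J ∈ Finset.range (M+1), qPoch q q (J+D) / (qPoch q q J * qPoch q q D) *
      (q^((D+1)*(M-J)) * Pop q u (M-J))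
    = ∑ s ∈ Finset.range (M+1), q^(s^2) / qPoch q q (M-s) * (q^((D+1)*s) * u s) := by
  have h := congrArg (fun F => PowerSeries.coeff M ((PowerSeries.rescale (q^(D+1)) (PowerSeries.mk fun n => q^(n^2) * u n)) * F)) (core_ps hq1 D)
  beta_reduce at h
  rw [mul_left_comm, ← map_mul, PowerSeries.coeff_mul, PowerSeries.coeff_mul,
    Finset.Nat.sum_antidiagonal_eq_sum_range_succ_mk,
    Finset.Nat.sum_antidiagonal_eq_sum_range_succ_mk] at h
  convert h using 1
  · apply Finset.sum_congr rfl
    intro J _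
    rw [Pop_coeff, PowerSeries.coeff_rescale, PowerSeries.coeff_mk, pow_mul]
  · apply Finset.sum_congr rfl
    intro s _
    simp only [PowerSeries.coeff_rescale, PowerSeries.coeff_mk, pow_mul]; ring

lemma qBinom_nat {q : ℂ} (hq1 : ‖q‖ < 1) (D J : ℕ) :
    qBinom q ((J:ℤ) + D) J = qPoch q q (J+D) / (qPoch q q J * qPoch q q D) := by
  unfold qBinom
  rw [if_pos ⟨by omega, by omega⟩, Int.toNat_natCast]
  have : ∀ j : ℕ, (1 - q ^ ((J:ℤ) + D - J + (j : ℤ) + 1)) / (1 - q ^ ((j : ℤ) + 1))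
      = (1 - q^(D+j+1)) / (1 - q^(j+1)) := by
    intro j
    rw [show ((J:ℤ) + D - J + (j : ℤ) + 1) = ((D+j+1 : ℕ):ℤ) by push_cast; ring,
      show ((j : ℤ) + 1) = ((j+1 : ℕ):ℤ) by push_cast; ring, zpow_natCast, zpow_natCast]
  rw [Finset.prod_congr rfl (fun j _ => this j)]
  clear this
  induction J with
  | zero => simp [qp_zero, div_self (qp_ne hq1 _)]
  | succ J ih =>
    rw [Finset.prod_range_succ, ih, qp_succ q J, show J + 1 + D = J+D+1 by ring, qp_succ q (J+D)]
    have h1 := qp_ne hq1 J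
    have h2 := one_sub_ne hq1 J
    have h3 := qp_ne hq1 D
    rw [show D+J+1 = J+D+1 by ring]
    field_simp

/-- Constraint indicator. -/
noncomputable def ind (m i K : ℕ) : ℂ := if i = m ∧ K = 0 then 0 else 1

/-- One transfer step. -/
noncomputable def stepf (q : ℂ) (m N i : ℕ) (f : ℕ → ℕ → ℂ) (K σ : ℕ) : ℂ :=
  ∑ K' ∈ Finset.range (N+1), if K ≤ K' then q^(K^2) *
    qBinom q ((K':ℤ) - K - ((i:ℕ)+1) + (2*((σ:ℤ)+K) + (min m (i+1) : ℕ))) ((K':ℤ) - K)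
      * f K' (σ+K) else 0

/-- The multisum functional. -/
noncomputable def Phi (q : ℂ) (m N : ℕ) : ℕ → (ℕ → ℕ → ℂ) → ℂ
  | 0, f => ∑ K ∈ Finset.range (N+1), ind m 0 K * f K 0
  | i+1, f => Phi q m N i (stepf q m N i (fun K σ => ind m (i+1) K * f K σ))

lemma Phi_congr (q : ℂ) (m N i : ℕ) : ∀ (f g : ℕ → ℕ → ℂ),
    (∀ K σ, (i < m ∨ (1 ≤ K ∧ i ≤ σ + m)) → f K σ = g K σ) → Phi q m N i f = Phi q m N i g := by
  induction i with
  | zero =>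
    intro f g h
    apply Finset.sum_congr rfl
    intro K _
    by_cases hc : 0 = m ∧ K = 0
    · simp [ind, hc]
    · rw [h K 0 (by omega)]
  | succ i ih =>
    intro f g h
    apply ih
    intro K σ hK
    apply Finset.sum_congr rfl
    intro K' _
    split_ifs with hKK
    · congr 1
      by_cases hc : i + 1 = m ∧ K' = 0
      · simp [ind, hc]
      · beta_reduce
        rw [h K' (σ+K) (by omega)]
    · rfl

lemma stepf_sum (q : ℂ) (m N i : ℕ) {ι : Type} (s : Finset ι) (c : ι → ℂ) (f : ι → ℕ → ℕ → ℂ) :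
    stepf q m N i (fun K σ => ∑ r ∈ s, c r * f r K σ)
    = fun K σ => ∑ r ∈ s, c r * stepf q m N i (f r) K σ := by
  funext K σ
  unfold stepf
  simp_rw [Finset.mul_sum]
  rw [Finset.sum_comm]
  apply Finset.sum_congr rfl
  intro K' _
  split_ifs with h
  · apply Finset.sum_congr rfl
    intro r _
    ring
  · simp

lemma Phi_sum (q : ℂ) (m N i : ℕ) {ι : Type} (s : Finset ι) (c : ι → ℂ) : ∀ (f : ι → ℕ → ℕ → ℂ),
    Phi q m N i (fun K σ => ∑ r ∈ s, c r * f r K σ)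
    = ∑ r ∈ s, c r * Phi q m N i (f r) := by
  induction i with
  | zero =>
    intro f
    simp only [Phi, Finset.mul_sum]
    rw [Finset.sum_comm]
    apply Finset.sum_congr rfl
    intro r _
    apply Finset.sum_congr rfl
    intro K _
    ring
  | succ i ih =>
    intro f
    simp only [Phi]
    rw [← ih, ← stepf_sum]
    congr 2
    funext K σ
    rw [Finset.mul_sum]
    apply Finset.sum_congr rfl
    intro r _
    ring

lemma Phi_sub (q : ℂ) (m N i : ℕ) (f g : ℕ → ℕ → ℂ) :
    Phi q m N i (fun K σ => f K σ - g K σ) = Phi q m N i f - Phi q m N i g := by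
  have := Phi_sum q m N i (Finset.univ : Finset Bool) (fun b => if b then 1 else -1)
    (fun b => if b then f else g)
  simp only [Fintype.sum_bool] at this
  simpa [sub_eq_add_neg] using this

lemma stepf_sub (q : ℂ) (m N i : ℕ) (f g : ℕ → ℕ → ℂ) :
    stepf q m N i (fun K σ => f K σ - g K σ) =
      fun K σ => stepf q m N i f K σ - stepf q m N i g K σ := by
  have := stepf_sum q m N i (Finset.univ : Finset Bool) (fun b => if b then 1 else -1)
    (fun b => if b then f else g)
  simp only [Fintype.sum_bool] at this
  simpa [sub_eq_add_neg] using this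

lemma stepf_delta {q : ℂ} (m N i : ℕ) (hi : i + 1 ≤ m) (g : ℕ → ℂ) :
    stepf q m N i (fun K σ => if K = 0 then g σ else 0) = fun K σ => if K = 0 then g σ else 0 := by
  funext K σ
  unfold stepf
  rw [Finset.sum_eq_single 0]
  · by_cases hK : K = 0
    · subst hK
      rw [min_eq_right hi]
      have : qBinom q (((0:ℕ):ℤ) - (0:ℕ) - ((i:ℕ)+1) + (2*((σ:ℤ)+(0:ℕ)) + ((i+1 : ℕ):ℤ))) (((0:ℕ):ℤ) - (0:ℕ)) = 1 := by
        unfold qBinom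
        rw [if_pos ⟨by simp, by push_cast; omega⟩]
        simp
      rw [this]; simp
    · rw [if_neg (by omega), if_neg hK]
  · intro K' _ h; simp [h]
  · simp

lemma Phi_delta {q : ℂ} (m N i : ℕ) : ∀ (_ : i < m) (g : ℕ → ℂ),
    Phi q m N i (fun K σ => if K = 0 then g σ else 0) = g 0 := by
  induction i with
  | zero =>
    intro h g
    simp [Phi, ind, h.ne]
  | succ i ih =>
    intro h g
    simp only [Phi]
    have : (fun K σ => ind m (i+1) K * (if K = 0 then g σ else 0)) = fun K σ => if K = 0 then g σ else 0 := by
      funext K σ; simp [ind, h.ne]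
    rw [this, stepf_delta m N i h.le, ih (by omega)]

/-- Shift exponent. -/
def ee (m i σ : ℕ) : ℕ := if i < m then 2*σ+1 else 2*σ - (i-m)

/-- Test function. -/
noncomputable def fu (q : ℂ) (m i : ℕ) (u : ℕ → ℂ) (n K σ : ℕ) : ℂ :=
  if K ≤ n then q^(ee m i σ * (n-K)) * u (n-K) else 0

lemma ite_range (N n : ℕ) (h : n ≤ N) (F : ℕ → ℂ) (K : ℕ) (hK : K ≤ n) :
    ∑ K' ∈ Finset.range (N+1), (if K ≤ K' ∧ K' ≤ n then F K' else 0)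
     = ∑ J ∈ Finset.range (n-K+1), F (K+J) := by
  rw [← Finset.sum_filter]
  have : (Finset.range (N+1)).filter (fun K' => K ≤ K' ∧ K' ≤ n) = Finset.Ico K (n+1) := by
    ext x; simp only [Finset.mem_filter, Finset.mem_range, Finset.mem_Ico]; omega
  rw [this, Finset.sum_Ico_eq_sum_range, show n + 1 - K = n - K + 1 by omega]

lemma kernel {q : ℂ} (hq1 : ‖q‖ < 1) (m N i n : ℕ) (hn : n ≤ N) (u : ℕ → ℂ) (K σ : ℕ)
    (hg : i < m ∨ (1 ≤ K ∧ i ≤ σ + m)) :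
    ∑ r ∈ Finset.range (n+1), q^(r^2) / qPoch q q (n-r) * fu q m i u r K σ
    = stepf q m N i (fu q m i (Pop q u) n) K σ := by
  by_cases hK : K ≤ n
  · have hd : 1 ≤ ee m i (σ+K) ∧ ee m i (σ + K) = ee m i σ + 2*K := by
      unfold ee; split_ifs <;> omega
    obtain ⟨D, hD⟩ : ∃ D, ee m i (σ+K) = D + 1 := ⟨ee m i (σ+K) - 1, by omega⟩
    have hl : ∑ r ∈ Finset.range (n+1), q^(r^2) / qPoch q q (n-r) * fu q m i u r K σ
      = ∑ r ∈ Finset.range (n+1), if K ≤ r ∧ r ≤ n then q^(r^2) / qPoch q q (n-r) * (q^(ee m i σ * (r-K)) * u (r-K)) else 0 := by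
      apply Finset.sum_congr rfl
      intro r hr
      have : r ≤ n := by simp at hr; omega
      simp [fu, this]
    have hr : stepf q m N i (fu q m i (Pop q u) n) K σ
      = ∑ K' ∈ Finset.range (N+1), if K ≤ K' ∧ K' ≤ n then q^(K^2) *
    qBinom q (((K'-K : ℕ):ℤ) + D) ((K'-K : ℕ) : ℤ)
      * (q^((D+1) * (n-K')) * Pop q u (n-K')) else 0 := by
      unfold stepf
      apply Finset.sum_congr rfl
      intro K' _
      by_cases h1 : K ≤ K'
      · by_cases h2 : K' ≤ n
        · rw [if_pos h1, if_pos ⟨h1, h2⟩]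
          simp only [fu, if_pos h2]
          have hx : ((K':ℤ) - K - ((i:ℕ)+1) + (2*((σ:ℤ)+K) + (min m (i+1) : ℕ))) = ((K'-K : ℕ):ℤ) + D := by
            unfold ee at hD
            split_ifs at hD <;> omega
          rw [hx, hD, ← Nat.cast_sub h1]
        · simp [fu, h1, h2]
      · simp [h1]
    rw [hl, hr, ite_range n n le_rfl _ K hK, ite_range N n hn _ K hK]
    have c := core hq1 D u (n-K)
    have hR : ∑ J ∈ Finset.range (n-K+1), q^(K^2) *
        qBinom q (((K+J-K : ℕ):ℤ) + D) ((K+J-K : ℕ) : ℤ) * (q^((D+1) * (n-(K+J))) * Pop q u (n-(K+J)))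
        = q^(K^2) * ∑ J ∈ Finset.range (n-K+1), qPoch q q (J+D) / (qPoch q q J * qPoch q q D) *
      (q^((D+1)*(n-K-J)) * Pop q u (n-K-J)) := by
      rw [Finset.mul_sum]
      apply Finset.sum_congr rfl
      intro J _
      rw [Nat.add_sub_cancel_left, qBinom_nat hq1, ← Nat.sub_sub]
      ring
    rw [hR, c, Finset.mul_sum]
    apply Finset.sum_congr rfl
    intro s _
    rw [Nat.add_sub_cancel_left, ← Nat.sub_sub, ← hD, hd.2]
    ring
  · unfold stepf
    rw [Finset.sum_eq_zero, Finset.sum_eq_zero]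
    · intro K' _
      split_ifs with h
      · simp [fu, show ¬ K' ≤ n by omega]
      · rfl
    · intro r hr
      have : r ≤ n := by simp at hr; omega
      simp [fu, show ¬ K ≤ r by omega]

/-- W operator. -/
noncomputable def Wop (q : ℂ) (m N i : ℕ) (u : ℕ → ℂ) (n : ℕ) : ℂ := Phi q m N i (fu q m i u n)

lemma L0 {q : ℂ} (hq1 : ‖q‖ < 1) (m N i n : ℕ) (hn : n ≤ N) (u : ℕ → ℂ) :
    Phi q m N i (stepf q m N i (fu q m i (Pop q u) n)) = Pop q (Wop q m N i u) n := by
  unfold Pop Wop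
  rw [← Phi_sum]
  apply Phi_congr
  intro K σ h
  exact (kernel hq1 m N i n hn u K σ h).symm

lemma L1 {q : ℂ} (hq1 : ‖q‖ < 1) (m N i n : ℕ) (hn : n ≤ N) (u : ℕ → ℂ) (hi : i + 1 < m) :
    Wop q m N (i+1) (Pop q u) n = Pop q (Wop q m N i u) n := by
  rw [← L0 hq1 m N i n hn u]
  unfold Wop
  simp only [Phi]
  congr 2
  funext K σ
  simp [ind, hi.ne, fu, ee, hi, show i < m by omega]

lemma L2 {q : ℂ} (hq1 : ‖q‖ < 1) (m N i n : ℕ) (hn : n ≤ N) (u : ℕ → ℂ) (hi : m ≤ i) :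
    Wop q m N (i+1) (Sop q (Pop q u)) n = Pop q (Wop q m N i u) n := by
  rw [← L0 hq1 m N i n hn u]
  unfold Wop
  simp only [Phi]
  apply Phi_congr
  intro K σ hg
  unfold stepf
  apply Finset.sum_congr rfl
  intro K' _
  split_ifs with h
  · congr 1
    have h1 : ind m (i+1) K' = 1 := by unfold ind; rw [if_neg (by omega)]
    beta_reduce
    rw [h1, one_mul]
    unfold fu Sop
    split_ifs with h2
    · rw [← mul_assoc, ← pow_add]
      congr 2
      have : ee m i (σ+K) = ee m (i+1) (σ+K) + 1 := by
        unfold ee; rw [if_neg (by omega), if_neg (by omega)]; omega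
      rw [this]; ring
    · rfl
  · rfl

lemma fu_S {q : ℂ} (m i n : ℕ) (u : ℕ → ℂ) (hi : i + 1 = m) (K σ : ℕ) :
    fu q m (i+1) (Sop q u) n K σ = fu q m i u n K σ := by
  subst hi
  have e1 : ee (i+1) (i+1) σ = 2*σ := by unfold ee; rw [if_neg (by omega)]; omega
  have e2 : ee (i+1) i σ = 2*σ+1 := by unfold ee; rw [if_pos (by omega)]
  unfold fu Sop
  rw [e1, e2]
  split_ifs
  · ring
  · rfl

lemma L3 {q : ℂ} (hq1 : ‖q‖ < 1) (m N i n : ℕ) (hn : n ≤ N) (u : ℕ → ℂ) (hi : i + 1 = m) :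
    Wop q m N (i+1) (Sop q (Pop q u)) n = Pop q (Wop q m N i u) n - Sop q (Pop q u) n := by
  rw [← L0 hq1 m N i n hn u]
  unfold Wop
  simp only [Phi]
  have : (fun K σ => ind m (i+1) K * fu q m (i+1) (Sop q (Pop q u)) n K σ)
     = fun K σ => fu q m i (Pop q u) n K σ - (if K = 0 then fu q m i (Pop q u) n 0 σ else 0) := by
    funext K σ
    rw [fu_S m i n _ hi]
    by_cases hK : K = 0
    · subst hK; simp [ind, hi]
    · simp [ind, hK]
  rw [this, stepf_sub, Phi_sub, stepf_delta m N i hi.le, Phi_delta m N i (by omega)]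
  congr 1
  simp [fu, ee, Sop, show i < m by omega]

lemma base_sum {q : ℂ} (hq1 : ‖q‖ < 1) (N n : ℕ) (hn : n ≤ N) (x : ℕ → ℂ) :
    ∑ K ∈ Finset.range (N+1), (if 0 ≤ K ∧ K ≤ n then q^(n-K) * Pop q x (n-K) else 0)
      = Pop q (Sop q x) n := by
  rw [ite_range N n hn _ 0 (by omega)]
  have := core hq1 0 x n
  simp only [Pop, Sop]
  convert this using 1
  · apply Finset.sum_congr rfl
    intro J _
    simp [qp_zero, div_self (qp_ne hq1 J), Pop]
  · apply Finset.sum_congr rfl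
    intro J _
    simp

lemma base_pos {q : ℂ} (hq1 : ‖q‖ < 1) (m N n : ℕ) (hn : n ≤ N) (x : ℕ → ℂ) (hm : 0 < m) :
    Wop q m N 0 (Pop q x) n = Pop q (Sop q x) n := by
  rw [← base_sum hq1 N n hn]
  unfold Wop
  simp [Phi, ind, hm.ne, fu, ee, hm]

lemma base_zero {q : ℂ} (hq1 : ‖q‖ < 1) (N n : ℕ) (hn : n ≤ N) (x : ℕ → ℂ) :
    Wop q 0 N 0 (Sop q (Pop q x)) n = Pop q (Sop q x) n - Sop q (Pop q x) n := by
  rw [← base_sum hq1 N n hn]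
  unfold Wop
  simp only [Phi]
  rw [Finset.sum_range_succ', Finset.sum_range_succ' _ N]
  simp [ind, fu, ee, Sop]

lemma Pop_congr (q : ℂ) (u v : ℕ → ℂ) (n : ℕ) (h : ∀ r ≤ n, u r = v r) : Pop q u n = Pop q v n := by
  unfold Pop
  apply Finset.sum_congr rfl
  intro r hr
  rw [h r (by simp at hr; omega)]

lemma chain1 {q : ℂ} (hq1 : ‖q‖ < 1) (m N : ℕ) (x : ℕ → ℂ) (i : ℕ) : i < m → ∀ n ≤ N,
    Wop q m N i ((Pop q)^[i+1] x) n = (Pop q)^[i+1] (Sop q x) n := by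
  induction i with
  | zero => intro h n hn; exact base_pos hq1 m N n hn x h
  | succ i ih =>
    intro h n hn
    rw [Function.iterate_succ_apply', L1 hq1 m N i n hn _ h, Function.iterate_succ_apply' _ (i+1)]
    apply Pop_congr
    intro r hr
    exact ih (by omega) r (by omega)

lemma chain2 {q : ℂ} (hq1 : ‖q‖ < 1) (m N : ℕ) (x : ℕ → ℂ) : ∀ n ≤ N,
    Wop q m N m (Sop q ((Pop q)^[m+1] x)) n
      = (Pop q)^[m+1] (Sop q x) n - Sop q ((Pop q)^[m+1] x) n := by
  intro n hn
  cases m with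
  | zero => exact base_zero hq1 N n hn x
  | succ m =>
    rw [Function.iterate_succ_apply', L3 hq1 (m+1) N m n hn _ rfl, Function.iterate_succ_apply' _ (m+1)]
    congr 1
    apply Pop_congr
    intro r hr
    exact chain1 hq1 (m+1) N x m (by omega) r (by omega)

lemma chain3 {q : ℂ} (hq1 : ‖q‖ < 1) (m N : ℕ) (y : ℕ → ℕ → ℂ)
    (hy : ∀ j, y j = Sop q (Pop q (y (j+1)))) (j : ℕ) : ∀ J, ∀ n ≤ N,
    Wop q m N (m+j) (y J) n = (Pop q)^[j] (Wop q m N m (y (J+j))) n := by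
  induction j with
  | zero => intro J n hn; rfl
  | succ j ih =>
    intro J n hn
    rw [hy J, ← add_assoc, L2 hq1 m N (m+j) n hn _ (by omega), Function.iterate_succ_apply']
    apply Pop_congr
    intro r hr
    rw [ih (J+1) r (by omega), show J + 1 + j = J + (j+1) by ring]

lemma Ut_succ (q : ℂ) (m t : ℕ) (K : Fin (t+1+1) → ℕ) :
    UtProdM q (t+1) m K = UtProdM q t m (fun i => K i.castSucc) *
      (q ^ (K (Fin.last t).castSucc ^ 2) *
      qBinom q ((K (Fin.last (t+1)) : ℤ) - (K (Fin.last t).castSucc : ℤ) - ((t:ℕ)+1) +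
        (2*(((∑ j : Fin t, K j.castSucc.castSucc : ℕ):ℤ) + (K (Fin.last t).castSucc : ℤ)) + (min m (t+1) : ℕ)))
        ((K (Fin.last (t+1)) : ℤ) - (K (Fin.last t).castSucc : ℤ))) := by
  unfold UtProdM
  rw [Fin.prod_univ_castSucc]
  congr 1
  · apply Finset.prod_congr rfl
    intro i _
    rw [Finset.sum_filter, Finset.sum_filter, Fin.sum_univ_castSucc]
    have h1 : ¬ (((Fin.last (t+1) : Fin (t+1+1)) : ℕ) ≤ ((i.castSucc : Fin (t+1)) : ℕ)) := by
      simp only [Fin.val_last, Fin.val_castSucc]; omega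
    rw [if_neg h1, add_zero]
    rfl
  · have hs : (∑ j ∈ Finset.univ.filter (fun j : Fin (t+1+1) => (j : ℕ) ≤ ((Fin.last t : Fin (t+1)) : ℕ)),
            (2 * (K j : ℤ) + if (j : ℕ) < m then 1 else 0))
        = 2*(((∑ j : Fin t, K j.castSucc.castSucc : ℕ):ℤ) + (K (Fin.last t).castSucc : ℤ)) + (min m (t+1) : ℕ) := by
      rw [Finset.sum_filter, Fin.sum_univ_castSucc]
      have h1 : ¬ (((Fin.last (t+1) : Fin (t+1+1)) : ℕ) ≤ ((Fin.last t : Fin (t+1)) : ℕ)) := by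
        simp only [Fin.val_last]; omega
      rw [if_neg h1, add_zero]
      have h2 : ∀ j : Fin (t+1), (if ((j.castSucc : Fin (t+1+1)) : ℕ) ≤ ((Fin.last t : Fin (t+1)) : ℕ) then
          (2 * (K j.castSucc : ℤ) + if ((j.castSucc : Fin (t+1+1)) : ℕ) < m then 1 else 0) else 0)
          = 2 * (K j.castSucc : ℤ) + if (j:ℕ) < m then 1 else 0 := by
        intro j
        rw [if_pos (by simp only [Fin.val_last, Fin.val_castSucc]; omega)]
        rfl
      rw [Finset.sum_congr rfl (fun j _ => h2 j), Finset.sum_add_distrib, ← Finset.mul_sum,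
        Fin.sum_univ_castSucc]
      push_cast
      congr 1
      rw [← Finset.sum_range (fun j => if j < m then (1:ℤ) else 0), Finset.sum_ite]
      simp only [Finset.sum_const_zero, add_zero, Finset.sum_const, nsmul_eq_mul, mul_one]
      have : (Finset.range (t+1)).filter (fun j => j < m) = Finset.range (min m (t+1)) := by
        ext x; simp only [Finset.mem_filter, Finset.mem_range]; omega
      rw [this, Finset.card_range]; push_cast; rfl
    rw [hs]
    rfl

lemma tupleSum (q : ℂ) (m N t : ℕ) : ∀ f : ℕ → ℕ → ℂ,
    ∑ k : Fin (t+1) → Fin (N+1),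
      (if (∀ i : Fin t, k i.castSucc ≤ k i.succ) ∧ (∀ j : Fin (t+1), (j:ℕ) = m → 1 ≤ (k j : ℕ)) then
        UtProdM q t m (fun i => (k i : ℕ)) * f (k (Fin.last t)) (∑ j : Fin t, (k j.castSucc : ℕ)) else 0)
    = Phi q m N t f := by
  induction t with
  | zero =>
    intro f
    rw [← Equiv.sum_comp (Equiv.funUnique (Fin 1) (Fin (N+1))).symm]
    simp only [Phi]
    rw [Finset.sum_range]
    apply Finset.sum_congr rfl
    intro K _
    simp only [UtProdM, ind, Finset.univ_eq_empty, Finset.prod_empty, Finset.sum_empty]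
    by_cases h : 0 = m ∧ (K:ℕ) = 0
    · rw [if_neg, if_pos h, zero_mul]
      rintro ⟨_, h2⟩
      have := h2 0 (by simpa using h.1)
      simp at this; omega
    · rw [if_pos, if_neg h]
      · simp
      · refine ⟨fun i => i.elim0, ?_⟩
        intro j hj
        have : j = 0 := Fin.ext (by omega)
        subst this
        simp at hj ⊢
        by_contra hc
        exact h ⟨hj, by simpa using hc⟩
  | succ t ih =>
    intro f
    simp only [Phi]
    rw [← ih, ← Equiv.sum_comp (Fin.snocEquiv (fun _ : Fin (t+1+1) => Fin (N+1))), Fintype.sum_prod_type_right]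
    apply Finset.sum_congr rfl
    intro k _
    unfold stepf
    rw [Finset.sum_range, Finset.mul_sum]
    have hz : ∀ (c : Prop) [Decidable c] (F : Fin (N+1) → ℂ),
        (if c then ∑ a, F a else 0) = ∑ a, if c then F a else 0 := by
      intro c _ F; split_ifs <;> simp
    rw [hz]
    apply Finset.sum_congr rfl
    intro a _
    simp only [Fin.snocEquiv, Equiv.coe_fn_mk]
    rw [Ut_succ]
    simp only [Fin.forall_fin_succ' (n := t), Fin.forall_fin_succ' (n := t+1), Fin.snoc_castSucc, Fin.succ_castSucc, Fin.succ_last, Fin.snoc_last,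
      Fin.val_castSucc, Fin.val_last]
    rw [Fin.sum_univ_castSucc]
    by_cases h1 : k (Fin.last t) ≤ a
    · have h1' : (k (Fin.last t) : ℕ) ≤ a := h1
      rw [if_pos h1']
      by_cases h2 : t + 1 = m ∧ (a : ℕ) = 0
      · have hi : ind m (t+1) a = 0 := by unfold ind; rw [if_pos h2]
        rw [if_neg (by intro h; have := h.2.2 h2.1; omega), hi]
        simp
      · have hi : ind m (t+1) a = 1 := by unfold ind; rw [if_neg h2]
        have h3 : t + 1 = m → 1 ≤ (a:ℕ) := by intro h; by_contra; exact h2 ⟨h, by omega⟩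
        rw [hi]
        congr 1
        · apply propext
          tauto
        · ring
    · have h1' : ¬ (k (Fin.last t) : ℕ) ≤ a := h1
      rw [if_neg h1', if_neg (by tauto)]
      simp

/-- Triangular numbers. -/
def tri (r : ℕ) : ℤ := (r.choose 2 : ℤ)

lemma tri_succ (r : ℕ) : tri (r+1) = tri r + r := by
  unfold tri
  rw [Nat.choose_succ_succ' r 1, Nat.choose_one_right]; push_cast; ring

lemma tri_two (r : ℕ) : 2 * tri r = (r:ℤ)^2 - r := by
  induction r with
  | zero => simp [tri]
  | succ r ih => rw [tri_succ]; push_cast; linear_combination ih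

/-- The sequence A. -/
noncomputable def Aq (q : ℂ) (j p : ℕ) (r : ℕ) : ℂ :=
  if r = 0 then 1 else (-1)^r * (q^(tri r - j*(r:ℤ)^2 - p*(r:ℤ)^2 - j*r) + q^(tri r - j*(r:ℤ)^2 - p*(r:ℤ)^2 + r + j*r))

/-- The sequence V. -/
noncomputable def Vq (q : ℂ) (j : ℕ) (r : ℕ) : ℂ :=
  if r = 0 then 1 else (-1)^r * (q^(tri r - j*(r:ℤ)^2 + r - j*r) + q^(tri r - j*(r:ℤ)^2 + j*r))

lemma mono {q : ℂ} (hq : q ≠ 0) (a : ℕ) (b c : ℤ) (h : (a:ℤ) + b = c) : q^a * q^b = q^c := by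
  rw [← zpow_natCast, ← zpow_add₀ hq, h]

lemma A_step {q : ℂ} (hq : q ≠ 0) (j p r : ℕ) : q^(r^2) * Aq q j (p+1) r = Aq q j p r := by
  unfold Aq
  split_ifs with h
  · simp [h]
  · rw [mul_left_comm, mul_add, mono hq _ _ (tri r - j*(r:ℤ)^2 - p*(r:ℤ)^2 - j*r) (by push_cast; ring),
      mono hq _ _ (tri r - j*(r:ℤ)^2 - p*(r:ℤ)^2 + r + j*r) (by push_cast; ring)]

lemma V_step {q : ℂ} (hq : q ≠ 0) (j r : ℕ) : q^(r^2) * Vq q (j+1) r = Aq q j 0 r := by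
  unfold Aq Vq
  split_ifs with h
  · simp [h]
  · rw [mul_left_comm, mul_add, mono hq _ _ (tri r - j*(r:ℤ)^2 - (0:ℕ)*(r:ℤ)^2 - j*r) (by push_cast; ring),
      mono hq _ _ (tri r - j*(r:ℤ)^2 - (0:ℕ)*(r:ℤ)^2 + r + j*r) (by push_cast; ring)]

lemma S_w {q : ℂ} (hq : q ≠ 0) (hq1 : ‖q‖ < 1) (j : ℕ) :
    Sop q (Bs q (Aq q j 0)) = Bs q (Vq q j) := by
  apply shiftB hq1 (fun r => (-1)^r * q^(-(2*(j:ℤ)+1) * tri (r+1)))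
  · simp [Aq, tri]
  · simp [Vq, tri]
  · intro r
    have hT := tri_two (r+1)
    have h1 := tri_succ (r+1)
    simp only [Aq, Nat.succ_ne_zero, if_false]
    rw [mul_sub, mul_left_comm (q^((r+1)^2)) ((-1)^(r+1)), mul_left_comm (q^((r+1)^2)) ((-1)^r),
      mono hq _ _ (tri (r+1) - j*((r+1:ℕ):ℤ)^2 - (0:ℕ)*((r+1:ℕ):ℤ)^2 - j*(r+1:ℕ)) (by
        rw [h1]; push_cast at *; linear_combination (-(j:ℤ)-1) * hT),
      mono hq _ _ (tri (r+1) - j*((r+1:ℕ):ℤ)^2 - (0:ℕ)*((r+1:ℕ):ℤ)^2 + (r+1:ℕ) + j*(r+1:ℕ)) (by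
        push_cast at *; linear_combination (-(j:ℤ)-1) * hT)]
    rw [pow_succ]; ring
  · intro r
    have hT := tri_two (r+1)
    have h1 := tri_succ (r+1)
    simp only [Vq, Nat.succ_ne_zero, if_false]
    rw [mul_left_comm, mul_left_comm (q^((r+1)*r)),
      mono hq _ _ (tri (r+1) - j*((r+1:ℕ):ℤ)^2 + (r+1:ℕ) - j*(r+1:ℕ)) (by
        rw [h1]; push_cast at *; linear_combination (-(j:ℤ)-1) * hT),
      mono hq _ _ (tri (r+1) - j*((r+1:ℕ):ℤ)^2 + j*(r+1:ℕ)) (by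
        push_cast at *; linear_combination (-(j:ℤ)-1) * hT)]
    rw [pow_succ]; ring

lemma w0 {q : ℂ} (hq : q ≠ 0) (hq1 : ‖q‖ < 1) (n : ℕ) :
    Bs q (Aq q 0 0) n = if n = 0 then 1 else 0 := by
  have hV : Vq q 0 = Aq q 0 0 := by
    funext r
    unfold Vq Aq
    split_ifs
    · rfl
    · push_cast
      ring_nf
  have h := congrFun (S_w hq hq1 0) n
  rw [hV] at h
  unfold Sop at h
  cases n with
  | zero => simp [Bs, Aq, qp_zero]
  | succ n =>
    have : (1 - q^(n+1)) * Bs q (Aq q 0 0) (n+1) = 0 := by linear_combination -h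
    simpa [one_sub_ne hq1 n] using this

lemma bailey_iter {q : ℂ} (hq1 : ‖q‖ < 1) (i : ℕ) (α : ℕ → ℂ) :
    (Pop q)^[i] (Bs q α) = Bs q (fun r => q^(i*r^2) * α r) := by
  induction i with
  | zero => simp
  | succ i ih =>
    rw [Function.iterate_succ_apply', ih, bailey hq1]
    congr 1
    funext r
    ring

lemma A_iter {q : ℂ} (hq : q ≠ 0) (hq1 : ‖q‖ < 1) (j p : ℕ) :
    (Pop q)^[p] (Bs q (Aq q j p)) = Bs q (Aq q j 0) := by
  induction p with
  | zero => rfl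
  | succ p ih =>
    rw [Function.iterate_succ_apply, bailey hq1, ← ih]
    congr 2
    funext r
    exact A_step hq j p r

lemma Pop_sub (q : ℂ) (u v : ℕ → ℂ) :
    Pop q (fun n => u n - v n) = fun n => Pop q u n - Pop q v n := by
  funext n
  unfold Pop
  rw [← Finset.sum_sub_distrib]
  apply Finset.sum_congr rfl
  intro r _
  ring

lemma Pop_iter_sub (q : ℂ) (j : ℕ) (u v : ℕ → ℂ) :
    (Pop q)^[j] (fun n => u n - v n) = fun n => (Pop q)^[j] u n - (Pop q)^[j] v n := by
  induction j with
  | zero => rfl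
  | succ j ih => rw [Function.iterate_succ_apply', ih, Pop_sub, Function.iterate_succ_apply',
      Function.iterate_succ_apply']

lemma Pop_iter_congr (q : ℂ) (N j : ℕ) (u v : ℕ → ℂ) (h : ∀ n ≤ N, u n = v n) :
    ∀ n ≤ N, (Pop q)^[j] u n = (Pop q)^[j] v n := by
  induction j with
  | zero => exact h
  | succ j ih =>
    intro n hn
    rw [Function.iterate_succ_apply', Function.iterate_succ_apply']
    exact Pop_congr q _ _ n (fun r hr => ih r (by omega))

lemma multisum {q : ℂ} (hq : q ≠ 0) (hq1 : ‖q‖ < 1) (m j N : ℕ) :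
    Phi q m N (m+j) (fun K _ => if K = N then 1 else 0) =
    (Pop q)^[m+j+1] (Sop q (Bs q (Aq q j (m+1)))) N - Bs q (fun r => q^(j*r^2) * Vq q j r) N := by
  have hf : Phi q m N (m+j) (fun K _ => if K = N then 1 else 0)
      = Wop q m N (m+j) (Bs q (Vq q 0)) N := by
    unfold Wop
    congr 1
    funext K σ
    unfold fu
    rw [← S_w hq hq1 0]
    unfold Sop
    rw [w0 hq hq1]
    by_cases h : K = N
    · simp [h]
    · by_cases h2 : K ≤ N
      · rw [if_neg h, if_neg (show ¬ N - K = 0 by omega)]; simp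
      · simp [h, h2]
  rw [hf]
  have hy : ∀ i, Bs q (Vq q i) = Sop q (Pop q (Bs q (Vq q (i+1)))) := by
    intro i
    rw [bailey hq1, ← S_w hq hq1]
    congr 2
    funext r
    exact (V_step hq i r).symm
  rw [chain3 hq1 m N (fun i => Bs q (Vq q i)) hy j 0 N le_rfl, zero_add]
  have c2 : ∀ n ≤ N, Wop q m N m (Bs q (Vq q j)) n =
      (fun n => (Pop q)^[m+1] (Sop q (Bs q (Aq q j (m+1)))) n - Bs q (Vq q j) n) n := by
    intro n hn
    have := chain2 hq1 m N (Bs q (Aq q j (m+1))) n hn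
    rw [A_iter hq hq1, S_w hq hq1] at this
    exact this
  rw [Pop_iter_congr q N j _ _ c2 N le_rfl, Pop_iter_sub, bailey_iter hq1 j, ← Function.iterate_add_apply,
    show j + (m+1) = m+j+1 by ring]

/-- The summand in the inner sum. -/
noncomputable def Et (q : ℂ) (t m : ℕ) (k : ℤ) : ℂ :=
  (-1 : ℂ) ^ k * q ^ (-(2 * (t : ℤ) + 3) * k * (k + 1) / 2 + ((m : ℤ) + 1) * k)

lemma Et_pos (q : ℂ) (t m s : ℕ) : Et q t m s =
    (-1)^s * q^(-(2 * (t : ℤ) + 3) * tri (s+1) + (m+1) * s) := by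
  unfold Et
  have hT := tri_two (s+1)
  rw [zpow_natCast, Int.ediv_eq_of_eq_mul_right (c := -(2 * (t : ℤ) + 3) * tri (s+1)) (by norm_num)]
  push_cast at hT
  linear_combination (2 * (t : ℤ) + 3) * hT

lemma Et_neg (q : ℂ) (t m s : ℕ) : Et q t m (-s) =
    (-1)^s * q^(-(2 * (t : ℤ) + 3) * tri s - (m+1) * s) := by
  unfold Et
  have hT := tri_two s
  rw [Int.ediv_eq_of_eq_mul_right (c := -(2 * (t : ℤ) + 3) * tri s) (by norm_num)
    (by linear_combination (2 * (t : ℤ) + 3) * hT)]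
  congr 1
  · rw [zpow_neg, zpow_natCast, ← inv_pow]; norm_num
  · congr 1; ring

/-- Partial sums. -/
noncomputable def Xs (q : ℂ) (t m : ℕ) : ℕ → ℂ
  | 0 => 1
  | r+1 => Xs q t m r + Et q t m ((r+1 : ℕ):ℤ) + Et q t m (-((r+1 : ℕ):ℤ))

lemma innerEt_sum (q : ℂ) (t m r : ℕ) :
    ∑ k ∈ Finset.Icc (-((r+1:ℕ) : ℤ)) (((r+1:ℕ) : ℤ) - 1), Et q t m k
      = Xs q t m r + Et q t m (-((r+1 : ℕ):ℤ)) := by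
  induction r with
  | zero =>
    have : Finset.Icc (-((0+1:ℕ) : ℤ)) (((0+1:ℕ) : ℤ) - 1) = {-1, 0} := by decide
    rw [this, Finset.sum_pair (by decide)]
    simp [Xs, Et]; ring
  | succ r ih =>
    have : Finset.Icc (-((r+1+1:ℕ) : ℤ)) (((r+1+1:ℕ) : ℤ) - 1) =
      insert (-((r+1+1:ℕ) : ℤ)) (insert ((r+1:ℕ):ℤ) (Finset.Icc (-((r+1:ℕ) : ℤ)) (((r+1:ℕ) : ℤ) - 1))) := by
      ext x; simp only [Finset.mem_Icc, Finset.mem_insert]; omega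
    rw [this, Finset.sum_insert, Finset.sum_insert, ih, Xs]
    · ring
    · simp only [Finset.mem_Icc]; omega
    · simp only [Finset.mem_Icc, Finset.mem_insert]; omega

lemma S_x {q : ℂ} (hq : q ≠ 0) (hq1 : ‖q‖ < 1) (m j : ℕ) :
    Sop q (Bs q (Aq q j (m+1))) = Bs q (fun r => if r = 0 then 1 else
      q^(r^2+r) * Xs q (m+j) m r - q^(r*(r-1)) * Xs q (m+j) m (r-1)) := by
  apply shiftB hq1 (Xs q (m+j) m)
  · simp [Aq, Xs]
  · simp [Xs]
  · intro r
    have hT := tri_two (r+1)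
    have h1 := tri_succ (r+1)
    simp only [Aq, Nat.succ_ne_zero, if_false, Xs]
    rw [Et_pos, Et_neg, h1]
    rw [show ∀ a b c : ℂ, a + b + c - a = b + c by intros; ring, mul_add (q^((r+1)^2)), mul_left_comm (q^((r+1)^2)), mul_left_comm (q^((r+1)^2)),
      mono hq _ _ (tri (r+1) - j*((r+1:ℕ):ℤ)^2 - (m+1:ℕ)*((r+1:ℕ):ℤ)^2 - j*(r+1:ℕ)) (by
        push_cast at *; linear_combination (-(m:ℤ)-j-2) * hT),
      mono hq _ _ (tri (r+1) - j*((r+1:ℕ):ℤ)^2 - (m+1:ℕ)*((r+1:ℕ):ℤ)^2 + (r+1:ℕ) + j*(r+1:ℕ)) (by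
        push_cast at *; linear_combination (-(m:ℤ)-j-2) * hT)]
    ring
  · intro r
    simp

lemma final_term {q : ℂ} (hq : q ≠ 0) (m j r : ℕ) :
    q^((m+j+1)*(r+1)^2) * (q^((r+1)^2+(r+1)) * Xs q (m+j) m (r+1) - q^((r+1)*r) * Xs q (m+j) m r)
      - q^(j*(r+1)^2) * Vq q j (r+1)
    = -(q^((m+j+2)*(r+1)^2-(r+1)) * (1 - q^(2*(r+1))) *
        (Xs q (m+j) m r + Et q (m+j) m (-((r+1 : ℕ):ℤ)))) := by
  have hT := tri_two (r+1)
  have h1 := tri_succ (r+1)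
  obtain ⟨e, he⟩ : ∃ e, e = (m+j+1)*(r+1)^2 + (r+1)*r := ⟨_, rfl⟩
  have he' : (m+j+2)*(r+1)^2-(r+1) = e := by
    rw [he]; apply Nat.sub_eq_of_eq_add; ring
  rw [he']
  have p1 : q^((m+j+1)*(r+1)^2) * q^((r+1)*r) = q^e := by rw [he, pow_add]
  have p2 : q^((m+j+1)*(r+1)^2) * q^((r+1)^2+(r+1)) = q^(e+2*(r+1)) := by rw [he, ← pow_add]; congr 1; ring
  have k1 : q^(e+2*(r+1)) * Et q (m+j) m ((r+1:ℕ):ℤ) + q^e * Et q (m+j) m (-((r+1 : ℕ):ℤ))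
      = q^(j*(r+1)^2) * Vq q j (r+1) := by
    rw [Et_pos, Et_neg, h1]
    simp only [Vq, Nat.succ_ne_zero, if_false]
    rw [mul_left_comm, mul_left_comm (q^e), mul_left_comm (q^(j*(r+1)^2)), mul_add (q^(j*(r+1)^2)),
      mono hq _ _ (tri (r+1) + (r+1:ℕ) - j*(r+1:ℕ)) (by
        rw [he]; push_cast at *; linear_combination (-(m:ℤ)-j-2) * hT),
      mono hq _ _ (tri (r+1) + j*(r+1:ℕ)) (by
        rw [he]; push_cast at *; linear_combination (-(m:ℤ)-j-2) * hT),
      mono hq _ _ (tri (r+1) + (r+1:ℕ) - j*(r+1:ℕ)) (by push_cast; ring),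
      mono hq _ _ (tri (r+1) + j*(r+1:ℕ)) (by push_cast; ring)]
    ring
  rw [Xs]
  rw [pow_add] at p2 k1
  linear_combination (Xs q (m+j) m r + Et q (m+j) m ((r+1:ℕ):ℤ) + Et q (m+j) m (-((r+1 : ℕ):ℤ))) * p2 - Xs q (m+j) m r * p1 + k1

/-- `-q^{t-n-1} C_n^{(t,m)}(q)` (defining sum on the left) equals the
multisum over tuples `n+1 = k_T ≥ … ≥ k_1 ≥ 0` with `k_M ≥ 1`; the paper's `t, m`
are `t+1, m+1` (so `2t+1 = 2t+3`, `t+1 = t+2`, and `k_M` is the 0-based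
coordinate `m`). -/
theorem stmt13 (t m n : ℕ) (hmt : m ≤ t) (q : ℂ)
    (hq0 : 0 < ‖q‖) (hq1 : ‖q‖ < 1) :
    -(∑ l ∈ Finset.range (n + 2),
      q ^ ((t + 2) * l ^ 2 - l) * (1 - q ^ (2 * l)) /
          (qPoch q q (n + 1 - l) * qPoch q q (n + 1 + l)) *
        ∑ k ∈ Finset.Icc (-(l : ℤ)) ((l : ℤ) - 1),
          (-1 : ℂ) ^ k * q ^ (-(2 * (t : ℤ) + 3) * k * (k + 1) / 2 + ((m : ℤ) + 1) * k)) =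
    ∑ k ∈ Finset.univ.filter
        (fun k : Fin (t+1) → Fin (n+2) =>
          (∀ i : Fin t, k i.castSucc ≤ k i.succ) ∧
          (k (Fin.last t) : ℕ) = n + 1 ∧ 1 ≤ (k ⟨m, by omega⟩ : ℕ)),
      UtProdM q t m (fun i => (k i : ℕ)) := by
  have hq : q ≠ 0 := norm_pos_iff.mp hq0
  obtain ⟨j, rfl⟩ := Nat.exists_eq_add_of_le hmt
  have hR := tupleSum q m (n+1) (m+j) (fun K _ => if K = n+1 then 1 else 0)
  rw [multisum hq hq1, S_x hq hq1, bailey_iter hq1] at hR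
  have hR2 : ∑ k ∈ Finset.univ.filter
        (fun k : Fin (m+j+1) → Fin (n+2) =>
          (∀ i : Fin (m+j), k i.castSucc ≤ k i.succ) ∧
          (k (Fin.last (m+j)) : ℕ) = n + 1 ∧ 1 ≤ (k ⟨m, by omega⟩ : ℕ)),
      UtProdM q (m+j) m (fun i => (k i : ℕ)) = ∑ k : Fin (m+j+1) → Fin (n+1+1),
      (if (∀ i : Fin (m+j), k i.castSucc ≤ k i.succ) ∧ (∀ a : Fin (m+j+1), (a:ℕ) = m → 1 ≤ (k a : ℕ)) then
        UtProdM q (m+j) m (fun i => (k i : ℕ)) * (if (k (Fin.last (m+j)) : ℕ) = n+1 then 1 else 0) else 0) := by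
    rw [Finset.sum_filter]
    apply Finset.sum_congr rfl
    intro k _
    have hc : (∀ a : Fin (m+j+1), (a:ℕ) = m → 1 ≤ (k a : ℕ)) ↔ 1 ≤ (k ⟨m, by omega⟩ : ℕ) := by
      constructor
      · intro h; exact h _ rfl
      · rintro h ⟨a, ha⟩ h2
        simp only at h2
        subst h2
        exact h
    simp only [hc]
    by_cases h1 : (k (Fin.last (m+j)) : ℕ) = n + 1
    · simp [h1]
    · simp [h1]
  rw [hR2, hR]
  unfold Bs
  rw [← Finset.sum_sub_distrib, ← Finset.sum_neg_distrib]
  apply Finset.sum_congr rfl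
  intro l _
  cases l with
  | zero => simp [Vq]
  | succ r =>
    have hi := innerEt_sum q (m+j) m r
    have hf := final_term hq m j r
    unfold Et at hi
    rw [hi]
    simp only [Nat.succ_ne_zero, if_false, Nat.add_sub_cancel]
    rw [← sub_div, hf]
    unfold Et
    ring
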